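/- arXiv:2403.13983 — 3 statements merged into one kernel-verified Lean document; each statement's English description precedes it below -/
import Mathlib

section
/- Let S be a finite state set, M a message set, ψ : M → S a bijection, ℓ : S → ℝ with ℓ(s) < 0 for all s, and v_LA the lying-aversion modification. Let G be a communication graph on states S and message-actions M whose edge relation contains (θ_1, m_1), (θ_2, m_1), (θ_2, m_2), (θ_3, m_2) and (θ_3, m_3), where θ_1, θ_2, θ_3 are pairwise distinct states and m_1, m_2, m_3 are pairwise distinct messages. Then v_LA is not G-monotone. (Impossibility of the first forbidden subgraph in the proof of the lying-aversion characterization.) -/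
open Finset

/-- A path on a communication graph with edge relation `E`. -/
def IsCommPath {S P : Type*} (E : S → P → Prop) {N : ℕ}
    (s : Fin (N + 1) → S) (p : Fin (N + 1) → P) : Prop :=
  Function.Injective s ∧ Function.Injective p ∧
    (∀ i, E (s i) (p i)) ∧ ∀ i : Fin N, E (s i.succ) (p i.castSucc)

/-- `v` is G-monotone. -/
def GMonotone {S P : Type*} (E : S → P → Prop) (v : P × S → ℝ) : Prop :=
  ∀ N : ℕ, 1 ≤ N → ∀ (s : Fin (N + 1) → S) (p : Fin (N + 1) → P),
    IsCommPath E s p →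
    0 < ∑ i : Fin (N + 1), (v (p i, s i) - v (p (i - 1), s i))

/-- The lying-aversion modification. -/
def vLA {M S : Type*} [DecidableEq S] (ψ : M ≃ S) (ℓ : S → ℝ) : M × S → ℝ :=
  fun q => if ψ q.1 = q.2 then 0 else ℓ q.2

/-!
Along a path `a - x - b - y`, G-monotonicity says that the gain from switching from `x` to `y` is
larger in state `b` than in state `a`. If `x` is a lie in `a` and `y` is a lie in `b`, the switch
costs nothing in `a` and gains nothing in `b`; so `x` is truthful in `a` or `y` is truthful in `b`.
The path `θ3 - m2 - θ2 - m1` thus leaves two cases: `ψ m2 = θ3`, and then `θ2 - m2 - θ3 - m3` forces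
`ψ m3 = θ3` as well; or `ψ m1 = θ2`, and then `θ1 - m1 - θ2 - m2` forces `ψ m2 = θ2` as well.
Both contradict the injectivity of `ψ`.
-/

section TwoStatePath

variable {S P : Type*} {E : S → P → Prop} {a b : S} {x y : P}

theorem IsCommPath.pair (hab : a ≠ b) (hxy : x ≠ y) (hax : E a x) (hbx : E b x) (hby : E b y) :
    IsCommPath E ![a, b] ![x, y] :=
  ⟨injective_pair_iff_ne.2 hab, injective_pair_iff_ne.2 hxy,
    Fin.forall_fin_two.2 ⟨hax, hby⟩, Fin.forall_fin_one.2 hbx⟩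

theorem GMonotone.sub_lt_sub {v : P × S → ℝ} (hv : GMonotone E v) (hab : a ≠ b) (hxy : x ≠ y)
    (hax : E a x) (hbx : E b x) (hby : E b y) :
    v (y, a) - v (x, a) < v (y, b) - v (x, b) := by
  have hsum : v (y, a) + v (x, b) < v (x, a) + v (y, b) := by
    simpa [Fin.sum_univ_two] using hv 1 le_rfl ![a, b] ![x, y] (.pair hab hxy hax hbx hby)
  linarith

end TwoStatePath

section LyingAversion

variable {M S : Type*} [DecidableEq S] {ψ : M ≃ S} {ℓ : S → ℝ}

theorem vLA_of_ne {m : M} {s : S} (h : ψ m ≠ s) : vLA ψ ℓ (m, s) = ℓ s :=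
  if_neg h

theorem le_vLA {s : S} (hs : ℓ s ≤ 0) (m : M) : ℓ s ≤ vLA ψ ℓ (m, s) := by
  unfold vLA
  split_ifs
  exacts [hs, le_rfl]

theorem vLA_sub_le_vLA_sub {a b : S} {x y : M} (ha : ℓ a ≤ 0) (hb : ℓ b ≤ 0)
    (hxa : ψ x ≠ a) (hyb : ψ y ≠ b) :
    vLA ψ ℓ (y, b) - vLA ψ ℓ (x, b) ≤ vLA ψ ℓ (y, a) - vLA ψ ℓ (x, a) := by
  rw [vLA_of_ne hxa, vLA_of_ne hyb]
  exact (sub_nonpos.2 (le_vLA hb x)).trans (sub_nonneg.2 (le_vLA ha y))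

theorem GMonotone.apply_eq_or_apply_eq {E : S → M → Prop} (h : GMonotone E (vLA ψ ℓ))
    {a b : S} {x y : M} (ha : ℓ a ≤ 0) (hb : ℓ b ≤ 0) (hab : a ≠ b) (hxy : x ≠ y)
    (hax : E a x) (hbx : E b x) (hby : E b y) :
    ψ x = a ∨ ψ y = b := by
  by_contra! hlies
  exact (h.sub_lt_sub hab hxy hax hbx hby).not_ge (vLA_sub_le_vLA_sub ha hb hlies.1 hlies.2)

theorem forbidden_subgraph_one_general (hℓ : ∀ s, ℓ s ≤ 0) {E : S → M → Prop}
    {θ1 θ2 θ3 : S} {m1 m2 m3 : M} (hθ12 : θ1 ≠ θ2) (hθ23 : θ2 ≠ θ3)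
    (hm12 : m1 ≠ m2) (hm23 : m2 ≠ m3)
    (h11 : E θ1 m1) (h21 : E θ2 m1) (h22 : E θ2 m2) (h32 : E θ3 m2) (h33 : E θ3 m3) :
    ¬ GMonotone E (vLA ψ ℓ) := by
  intro h
  have truth12 : ψ m1 = θ1 ∨ ψ m2 = θ2 :=
    h.apply_eq_or_apply_eq (hℓ θ1) (hℓ θ2) hθ12 hm12 h11 h21 h22
  have truth23 : ψ m2 = θ2 ∨ ψ m3 = θ3 :=
    h.apply_eq_or_apply_eq (hℓ θ2) (hℓ θ3) hθ23 hm23 h22 h32 h33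
  have truth32 : ψ m2 = θ3 ∨ ψ m1 = θ2 :=
    h.apply_eq_or_apply_eq (hℓ θ3) (hℓ θ2) hθ23.symm hm12.symm h32 h22 h21
  rcases truth32 with hm2 | hm1
  · have hm3 : ψ m3 = θ3 := truth23.resolve_left fun hm2' => hθ23 (hm2'.symm.trans hm2)
    exact hm23 (ψ.injective (hm2.trans hm3.symm))
  · have hm2 : ψ m2 = θ2 := truth12.resolve_left fun hm1' => hθ12 (hm1'.symm.trans hm1)
    exact hm12 (ψ.injective (hm1.trans hm2.symm))

end LyingAversion

/-- Impossibility of the first forbidden subgraph: if the edge relation contains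
`(θ1,m1), (θ2,m1), (θ2,m2), (θ3,m2), (θ3,m3)` with pairwise-distinct states and
pairwise-distinct messages, then the lying-aversion modification is not G-monotone. -/
theorem forbidden_subgraph_one {S M : Type*} [Fintype S] [Fintype M] [DecidableEq S]
    (ψ : M ≃ S) (ℓ : S → ℝ) (hℓ : ∀ s, ℓ s < 0)
    (E : S → M → Prop) (θ1 θ2 θ3 : S) (m1 m2 m3 : M)
    (hθ12 : θ1 ≠ θ2) (hθ13 : θ1 ≠ θ3) (hθ23 : θ2 ≠ θ3)
    (hm12 : m1 ≠ m2) (hm13 : m1 ≠ m3) (hm23 : m2 ≠ m3)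
    (h11 : E θ1 m1) (h21 : E θ2 m1) (h22 : E θ2 m2) (h32 : E θ3 m2) (h33 : E θ3 m3) :
    ¬ GMonotone E (vLA ψ ℓ) :=
  forbidden_subgraph_one_general (fun s => (hℓ s).le) hθ12 hθ23 hm12 hm23 h11 h21 h22 h32 h33
end

section
/- Let S = {s*, θ_1, …, θ_n} be a finite state set with n ≥ 1 and all listed states pairwise distinct, M a message set, ψ : M → S a bijection, and ℓ : S → ℝ with ℓ(s) < 0 for all s. Let m* := ψ⁻¹(s*) and m_i := ψ⁻¹(θ_i) for each i. Let G be the partial-revelation communication graph on states S and message-actions {m*, m_1, …, m_n} whose edge relation is E = { (θ_i, m_i) : 1 ≤ i ≤ n } ∪ { (s*, m_i) : 1 ≤ i ≤ n } ∪ { (s*, m*) }. Then the lying-aversion modification v_LA satisfies strong graph-monotonicity on G; in particular v_LA is G-monotone. (One direction of the proposition characterizing lying-aversion-stabilized communication graphs: partial-revelation graphs.) -/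
open Finset

/-- `v` satisfies strong graph-monotonicity (SGM) on the communication graph `E`. -/
def SGMonotone {S P : Type*} (E : S → P → Prop) (v : P × S → ℝ) : Prop :=
  ∀ N : ℕ, 1 ≤ N → ∀ (s : Fin (N + 1) → S) (p : Fin (N + 1) → P),
    IsCommPath E s p →
    (v (p 0, s 0) - v (p (Fin.last N), s 0) ≥ v (p 0, s 1) - v (p (Fin.last N), s 1)) ∧
    (N = 1 → v (p 0, s 0) - v (p (Fin.last N), s 0) > v (p 0, s 1) - v (p (Fin.last N), s 1))

/-- The partial-revelation edge relation: each non-central state `θ i` sends its truthful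
message `m i = ψ⁻¹ (θ i)`, and the central state `s*` sends every message, including its
truthful message `m* = ψ⁻¹ s*`. -/
def partialRevelationE {S M : Type*} {n : ℕ} (ψ : M ≃ S) (sstar : S) (θ : Fin n → S) :
    S → M → Prop :=
  fun s m =>
    (∃ i, s = θ i ∧ m = ψ.symm (θ i)) ∨
    (s = sstar ∧ ∃ i, m = ψ.symm (θ i)) ∨
    (s = sstar ∧ m = ψ.symm sstar)

/-! At a truthful message the payoff `vLA` is `0`, and at a lie it is negative; so replacing a
truthful message `m` by `m'` costs something in state `ψ m`, while in any other state the same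
replacement costs nothing. Hence SGM holds as soon as every path starts with a truthful message.
On a partial-revelation graph it does: the second state of a path sends two different messages, so
it is the hub `s*`; the first state is therefore not the hub and can only tell the truth.

SGM implies G-monotonicity on every graph: by SGM, deleting `s₀, p₀` from a path does not increase
the cyclic sum, and for paths with two states SGM is strict. -/

section Monotonicity

variable {S P : Type*} {E : S → P → Prop} {N : ℕ}

theorem IsCommPath.tail {s : Fin (N + 2) → S} {p : Fin (N + 2) → P} (h : IsCommPath E s p) :
    IsCommPath E (Fin.tail s) (Fin.tail p) :=
  ⟨h.1.comp (Fin.succ_injective _), h.2.1.comp (Fin.succ_injective _),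
    fun i => h.2.2.1 i.succ, fun i => h.2.2.2 i.succ⟩

theorem sum_fin_sub_one_eq_last_add {A : Type*} [AddCommMonoid A]
    (f : Fin (N + 1) → Fin (N + 1) → A) :
    ∑ i, f i (i - 1) = f 0 (Fin.last N) + ∑ i : Fin N, f i.succ i.castSucc := by
  have zero_sub_one : (0 : Fin (N + 1)) - 1 = Fin.last N :=
    sub_eq_of_eq_add (Fin.last_add_one N).symm
  have succ_sub_one (i : Fin N) : i.succ - 1 = i.castSucc :=
    sub_eq_of_eq_add (Fin.coeSucc_eq_succ (a := i)).symm
  simp only [Fin.sum_univ_succ, zero_sub_one, succ_sub_one]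

theorem sum_cyclic_eq_tail_add (v : P × S → ℝ) (s : Fin (N + 2) → S) (p : Fin (N + 2) → P) :
    ∑ i, (v (p i, s i) - v (p (i - 1), s i)) =
      (∑ i, (v (Fin.tail p i, Fin.tail s i) - v (Fin.tail p (i - 1), Fin.tail s i))) +
        ((v (p 0, s 0) - v (p (Fin.last (N + 1)), s 0)) -
          (v (p 0, s 1) - v (p (Fin.last (N + 1)), s 1))) := by
  rw [sum_fin_sub_one_eq_last_add fun i j => v (p i, s i) - v (p j, s i),
    sum_fin_sub_one_eq_last_add
      fun i j => v (Fin.tail p i, Fin.tail s i) - v (Fin.tail p j, Fin.tail s i),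
    Fin.sum_univ_succ]
  simp only [Fin.tail, Fin.succ_last, Fin.succ_castSucc, Fin.succ_zero_eq_one, Fin.castSucc_zero]
  ring

theorem SGMonotone.gMonotone {v : P × S → ℝ} (hv : SGMonotone E v) : GMonotone E v := by
  intro N hN
  induction N, hN using Nat.le_induction with
  | base =>
    intro s p h
    have strict := (hv 1 le_rfl s p h).2 rfl
    rw [sum_cyclic_eq_tail_add]
    simpa using strict
  | succ N hN ih =>
    intro s p h
    have tail_pos := ih (Fin.tail s) (Fin.tail p) h.tail
    have step := (hv (N + 1) (by omega) s p h).1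
    rw [sum_cyclic_eq_tail_add]
    linarith

end Monotonicity

section LyingAversion

variable {S M : Type*}

theorem vLA_sub_lt_vLA_sub [DecidableEq S] {ψ : M ≃ S} {ℓ : S → ℝ} {m m' : M} {s : S}
    (hm : m' ≠ m) (hs : ψ m ≠ s) (hℓm : ℓ (ψ m) < 0) (hℓs : ℓ s ≤ 0) :
    vLA ψ ℓ (m, s) - vLA ψ ℓ (m', s) < vLA ψ ℓ (m, ψ m) - vLA ψ ℓ (m', ψ m) := by
  have truth : vLA ψ ℓ (m, ψ m) = 0 := if_pos rfl
  have lie : vLA ψ ℓ (m', ψ m) = ℓ (ψ m) := if_neg (ψ.injective.ne hm)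
  have lie_at_s : vLA ψ ℓ (m, s) = ℓ s := if_neg hs
  have le_at_s : ℓ s ≤ vLA ψ ℓ (m', s) := by
    unfold vLA
    split_ifs
    exacts [hℓs, le_rfl]
  linarith

/-- Every state other than the hub `c` can only send its truthful message, `ψ m` being the state
that `m` asserts. This is the feature of partial-revelation graphs that stabilizes them; the set of
messages available to the hub is left unconstrained. -/
def TruthfulAwayFrom (E : S → M → Prop) (ψ : M → S) (c : S) : Prop :=
  ∀ ⦃s m⦄, E s m → s ≠ c → ψ m = s

theorem truthfulAwayFrom_partialRevelationE {n : ℕ} (ψ : M ≃ S) (sstar : S) (θ : Fin n → S) :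
    TruthfulAwayFrom (partialRevelationE ψ sstar θ) ψ sstar := by
  rintro s m (⟨i, rfl, rfl⟩ | ⟨rfl, -⟩ | ⟨rfl, -⟩) hs
  · exact ψ.apply_symm_apply _
  all_goals exact absurd rfl hs

namespace TruthfulAwayFrom

variable {E : S → M → Prop} {ψ : M → S} {c : S}

theorem eq_hub_of_ne (hE : TruthfulAwayFrom E ψ c) (hψ : Function.Injective ψ) {s : S} {m m' : M}
    (h : E s m) (h' : E s m') (hm : m ≠ m') : s = c := by
  by_contra hs
  exact hm (hψ ((hE h hs).trans (hE h' hs).symm))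

theorem apply_path_zero (hE : TruthfulAwayFrom E ψ c) (hψ : Function.Injective ψ) {N : ℕ}
    {s : Fin (N + 2) → S} {p : Fin (N + 2) → M} (h : IsCommPath E s p) : ψ (p 0) = s 0 := by
  obtain ⟨hs, hp, hedge, hback⟩ := h
  have second_eq_hub : s 1 = c := hE.eq_hub_of_ne hψ (hback 0) (hedge 1) (hp.ne zero_ne_one)
  have first_ne_hub : s 0 ≠ c := second_eq_hub ▸ hs.ne zero_ne_one
  exact hE (hedge 0) first_ne_hub

theorem sgMonotone_vLA [DecidableEq S] {ψ : M ≃ S} {ℓ : S → ℝ} (hE : TruthfulAwayFrom E ψ c)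
    (hℓ : ∀ s, ℓ s < 0) : SGMonotone E (vLA ψ ℓ) := by
  rintro (_ | N) hN s p h
  · omega
  have truthful : ψ (p 0) = s 0 := hE.apply_path_zero ψ.injective h
  have last_ne : p (Fin.last (N + 1)) ≠ p 0 := h.2.1.ne Fin.last_pos.ne'
  have second_ne : ψ (p 0) ≠ s 1 := truthful ▸ h.1.ne zero_ne_one
  have strict := vLA_sub_lt_vLA_sub last_ne second_ne (hℓ _) (hℓ _).le
  rw [truthful] at strict
  exact ⟨strict.le, fun _ => strict⟩

end TruthfulAwayFrom

end LyingAversion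

theorem partial_revelation_stabilized_general {S M : Type*} [DecidableEq S] {E : S → M → Prop}
    {ψ : M ≃ S} {c : S} {ℓ : S → ℝ} (hE : TruthfulAwayFrom E ψ c) (hℓ : ∀ s, ℓ s < 0) :
    SGMonotone E (vLA ψ ℓ) ∧ GMonotone E (vLA ψ ℓ) :=
  ⟨hE.sgMonotone_vLA hℓ, (hE.sgMonotone_vLA hℓ).gMonotone⟩

/-- On a partial-revelation communication graph, the lying-aversion modification satisfies
strong graph-monotonicity; in particular it is G-monotone. -/
theorem partial_revelation_stabilized {S M : Type*} [Fintype S] [Fintype M]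
    [DecidableEq S]
    (n : ℕ) (hn : 1 ≤ n)
    (ψ : M ≃ S) (ℓ : S → ℝ) (hℓ : ∀ s, ℓ s < 0)
    (sstar : S) (θ : Fin n → S)
    (hθinj : Function.Injective θ) (hθstar : ∀ i, θ i ≠ sstar)
    (hcover : ∀ s : S, s = sstar ∨ ∃ i, s = θ i) :
    SGMonotone (partialRevelationE ψ sstar θ) (vLA ψ ℓ) ∧
      GMonotone (partialRevelationE ψ sstar θ) (vLA ψ ℓ) :=
  partial_revelation_stabilized_general (truthfulAwayFrom_partialRevelationE ψ sstar θ) hℓ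
end

section
/- Let G be a communication graph with finite state set S and exactly two message-actions p_0 ≠ p_1. Suppose there is a distinguished state s* adjacent to both p_0 and p_1, every other state is adjacent to exactly one of p_0, p_1, and no state other than s* is adjacent to both. For v : {p_0, p_1} × S → ℝ write d(s) := v(p_1, s) − v(p_0, s). Then v is G-monotone if and only if d(s) < d(s*) for every state s ≠ s* adjacent to p_0, and d(s') > d(s*) for every state s' ≠ s* adjacent to p_1. (Two-message characterization of graph monotonicity underlying the analysis of uncooperative empathy in the vertically differentiated salesperson example.) -/
open Finset

/-!
With at most two message-actions a path of length at least one visits exactly two states, so it has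
the form `(s, p, t, q)`. Its cyclic sum regroups as
`(v (q, t) - v (p, t)) - (v (q, s) - v (p, s))`, so G-monotonicity compares a state `t` adjacent to
both message-actions with every other state `s` adjacent to `p`, once for each choice of `p`.
-/

section Paths

variable {S P : Type*} {E : S → P → Prop}

theorem IsCommPath.natCast_add_one_le_card {N : ℕ} {s : Fin (N + 1) → S} {p : Fin (N + 1) → P}
    (h : IsCommPath E s p) : ((N + 1 : ℕ) : ℕ∞) ≤ ENat.card P := by
  simpa using ENat.card_le_card_of_injective h.2.1

theorem isCommPath_one_iff {s : Fin (1 + 1) → S} {p : Fin (1 + 1) → P} :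
    IsCommPath E s p ↔
      s 0 ≠ s 1 ∧ p 0 ≠ p 1 ∧ (E (s 0) (p 0) ∧ E (s 1) (p 1)) ∧ E (s 1) (p 0) := by
  simp [IsCommPath, Function.Injective, Fin.forall_fin_two, eq_comm]

theorem cyclic_sum_fin_two (v : P × S → ℝ) (s : Fin (1 + 1) → S) (p : Fin (1 + 1) → P) :
    ∑ i, (v (p i, s i) - v (p (i - 1), s i)) =
      (v (p 1, s 1) - v (p 0, s 1)) - (v (p 1, s 0) - v (p 0, s 0)) := by
  have pred_zero : (0 : Fin 2) - 1 = 1 := rfl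
  rw [Fin.sum_univ_two, pred_zero, sub_self]
  ring

end Paths

section GMonotone

variable {S P : Type*} {E : S → P → Prop} {v : P × S → ℝ}

theorem GMonotone.sub_lt_sub_s14 (hv : GMonotone E v) {s t : S} {p q : P} (hst : s ≠ t) (hpq : p ≠ q)
    (hsp : E s p) (htp : E t p) (htq : E t q) :
    v (q, s) - v (p, s) < v (q, t) - v (p, t) := by
  have path : IsCommPath (N := 1) E ![s, t] ![p, q] :=
    isCommPath_one_iff.2 ⟨hst, hpq, ⟨hsp, htq⟩, htp⟩
  have sum_pos := hv 1 le_rfl _ _ path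
  rw [cyclic_sum_fin_two] at sum_pos
  exact sub_pos.1 sum_pos

theorem gMonotone_iff_of_card_le_two (hP : ENat.card P ≤ 2) :
    GMonotone E v ↔ ∀ s t p q, s ≠ t → p ≠ q → E s p → E t p → E t q →
      v (q, s) - v (p, s) < v (q, t) - v (p, t) := by
  refine ⟨fun hv _ _ _ _ => hv.sub_lt_sub_s14, fun h N hN s p path => ?_⟩
  obtain rfl : N = 1 := by
    have : N + 1 ≤ 2 := by exact_mod_cast path.natCast_add_one_le_card.trans hP
    omega
  obtain ⟨hs, hp, ⟨h00, h11⟩, h10⟩ := isCommPath_one_iff.1 path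
  rw [cyclic_sum_fin_two]
  exact sub_pos.2 (h _ _ _ _ hs hp h00 h10 h11)

theorem two_message_gMonotone_iff_general {p₀ p₁ : P} (hp : p₀ ≠ p₁)
    (hP : ∀ p : P, p = p₀ ∨ p = p₁) :
    GMonotone E v ↔ ∀ t, E t p₀ → E t p₁ →
      (∀ s, s ≠ t → E s p₀ → v (p₁, s) - v (p₀, s) < v (p₁, t) - v (p₀, t)) ∧
      (∀ s, s ≠ t → E s p₁ → v (p₁, s) - v (p₀, s) > v (p₁, t) - v (p₀, t)) := by
  have card_le : ENat.card P ≤ 2 := by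
    have univ_eq : (Set.univ : Set P) = {p₀, p₁} := Set.ext fun p => by simpa using hP p
    rw [← Set.encard_univ, univ_eq]
    exact (Set.encard_pair hp).le
  rw [gMonotone_iff_of_card_le_two card_le]
  constructor
  · intro h t ht₀ ht₁
    refine ⟨fun s hs hs₀ => h s t p₀ p₁ hs hp hs₀ ht₀ ht₁, fun s hs hs₁ => ?_⟩
    linarith [h s t p₁ p₀ hs hp.symm hs₁ ht₁ ht₀]
  · intro h s t p q hst hpq hsp htp htq
    rcases hP p with rfl | rfl <;> rcases hP q with rfl | rfl
    · exact absurd rfl hpq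
    · exact (h t htp htq).1 s hst hsp
    · linarith [(h t htq htp).2 s hst hsp]
    · exact absurd rfl hpq

end GMonotone

/-- Two-message characterization of graph monotonicity: with exactly two message-actions
`p0 ≠ p1`, a distinguished state `s*` adjacent to both, and every other state adjacent to
exactly one of them, `v` is G-monotone iff, writing `d s = v (p1, s) − v (p0, s)`,
`d s < d s*` for every `s ≠ s*` adjacent to `p0` and `d s' > d s*` for every `s' ≠ s*`
adjacent to `p1`. -/
theorem two_message_gMonotone_iff {S P : Type*} [Fintype S] [Fintype P]
    (p0 p1 : P) (hp : p0 ≠ p1) (hP : ∀ p : P, p = p0 ∨ p = p1)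
    (E : S → P → Prop) (sstar : S)
    (h0 : E sstar p0) (h1 : E sstar p1)
    (hother : ∀ s, s ≠ sstar → (E s p0 ∨ E s p1) ∧ ¬ (E s p0 ∧ E s p1))
    (v : P × S → ℝ) :
    GMonotone E v ↔
      ((∀ s, s ≠ sstar → E s p0 →
          v (p1, s) - v (p0, s) < v (p1, sstar) - v (p0, sstar)) ∧
       (∀ s', s' ≠ sstar → E s' p1 →
          v (p1, s') - v (p0, s') > v (p1, sstar) - v (p0, sstar))) := by
  have bridge_eq : ∀ t, E t p0 → E t p1 → t = sstar := fun t ht0 ht1 =>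
    by_contra fun ht => (hother t ht).2 ⟨ht0, ht1⟩
  rw [two_message_gMonotone_iff_general hp hP]
  exact ⟨fun h => h sstar h0 h1, fun h t ht0 ht1 => bridge_eq t ht0 ht1 ▸ h⟩
end
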